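/- arXiv:1705.10071 — 5 statements merged into one kernel-verified Lean document; each statement's English description precedes it below -/
import Mathlib

section
/- Let n ≥ 1 be an integer, β > 0, C > 0, α ∈ (0,1], and y ∈ ℝⁿ. Suppose F : ℝⁿ \ {y} → ℝ is differentiable on ℝⁿ \ {y} and satisfies |F(x)| ≤ C‖x−y‖^{−β} and ‖DF(x)‖ ≤ C‖x−y‖^{−β−1} for all x ≠ y, where DF(x) is the Fréchet derivative. Then for all x₁, x₂ ∈ ℝⁿ \ {y}, |F(x₁) − F(x₂)| ≤ 2^{β+3} C ‖x₁−x₂‖^{α} / (min(‖x₁−y‖, ‖x₂−y‖))^{β+α}. -/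
open Real

section HolderOfDecay

variable {E G : Type*} [NormedAddCommGroup E] [NormedSpace ℝ E]
  [NormedAddCommGroup G] [NormedSpace ℝ G]

/-- A function whose derivative decays like `‖x - y‖ ^ (-β - 1)` satisfies a Lipschitz estimate
between points whose mutual distance is at most half their distance to `y`. -/
theorem norm_sub_le_of_fderiv_decay {β C m : ℝ} (hβ : 0 ≤ β) (hC : 0 ≤ C) (hm : 0 < m) {y : E}
    {F : E → G} (hdiff : ∀ x, x ≠ y → DifferentiableAt ℝ F x)
    (hDF : ∀ x, x ≠ y → ‖fderiv ℝ F x‖ ≤ C * ‖x - y‖ ^ (-β - 1))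
    {x₁ x₂ : E} (hx₁ : m ≤ ‖x₁ - y‖) (hd : 2 * ‖x₁ - x₂‖ ≤ m) :
    ‖F x₁ - F x₂‖ ≤ C * (m / 2) ^ (-β - 1) * ‖x₁ - x₂‖ := by
  have dist_ge : ∀ z ∈ Metric.closedBall x₁ ‖x₁ - x₂‖, m / 2 ≤ ‖z - y‖ := by
    intro z hz
    rw [mem_closedBall_iff_norm'] at hz
    have := norm_sub_le_norm_sub_add_norm_sub x₁ z y
    linarith
  have ne_center : ∀ z ∈ Metric.closedBall x₁ ‖x₁ - x₂‖, z ≠ y := by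
    rintro z hz rfl
    have := dist_ge z hz
    rw [sub_self, norm_zero] at this
    linarith
  refine (convex_closedBall x₁ ‖x₁ - x₂‖).norm_image_sub_le_of_norm_fderiv_le (𝕜 := ℝ)
    (fun z hz => hdiff z (ne_center z hz)) (fun z hz => (hDF z (ne_center z hz)).trans ?_)
    (mem_closedBall_iff_norm'.2 le_rfl) (Metric.mem_closedBall_self (norm_nonneg _))
  exact mul_le_mul_of_nonneg_left
    (rpow_le_rpow_of_nonpos (by positivity) (dist_ge z hz) (by linarith)) hC

/-- Pointwise decay of a function and of its derivative away from `y` implies a weighted Hölder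
estimate. -/
theorem norm_sub_le_rpow_of_decay {β C α : ℝ} (hβ : 0 ≤ β) (hC : 0 ≤ C) (hα : 0 ≤ α)
    (hα1 : α ≤ 1) {y : E} {F : E → G} (hdiff : ∀ x, x ≠ y → DifferentiableAt ℝ F x)
    (hF : ∀ x, x ≠ y → ‖F x‖ ≤ C * ‖x - y‖ ^ (-β))
    (hDF : ∀ x, x ≠ y → ‖fderiv ℝ F x‖ ≤ C * ‖x - y‖ ^ (-β - 1))
    {x₁ x₂ : E} (hx₁ : x₁ ≠ y) (hx₂ : x₂ ≠ y) :
    ‖F x₁ - F x₂‖ ≤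
      (2 : ℝ) ^ (β + 3) * C * ‖x₁ - x₂‖ ^ α / (min ‖x₁ - y‖ ‖x₂ - y‖) ^ (β + α) := by
  have hm : 0 < min ‖x₁ - y‖ ‖x₂ - y‖ :=
    lt_min (norm_sub_pos_iff.2 hx₁) (norm_sub_pos_iff.2 hx₂)
  have hm₁ := min_le_left ‖x₁ - y‖ ‖x₂ - y‖
  have hm₂ := min_le_right ‖x₁ - y‖ ‖x₂ - y‖
  generalize min ‖x₁ - y‖ ‖x₂ - y‖ = m at hm hm₁ hm₂ ⊢
  have hd := norm_nonneg (x₁ - x₂)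
  have rhs_eq : (2 : ℝ) ^ (β + 3) * C * ‖x₁ - x₂‖ ^ α / m ^ (β + α) =
      C * m ^ (-β) * (2 ^ (β + 3) * (‖x₁ - x₂‖ / m) ^ α) := by
    rw [div_rpow hd hm.le, rpow_add hm, rpow_neg hm.le]
    field_simp
  rw [rhs_eq]
  rcases le_total m (2 * ‖x₁ - x₂‖) with h | h
  · have decay_le : ∀ x, x ≠ y → m ≤ ‖x - y‖ → ‖F x‖ ≤ C * m ^ (-β) := fun x hx hmx =>
      (hF x hx).trans <| mul_le_mul_of_nonneg_left
        (rpow_le_rpow_of_nonpos hm hmx (by linarith)) hC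
    have half_le : (1 / 2 : ℝ) ≤ (‖x₁ - x₂‖ / m) ^ α := calc
      (1 / 2 : ℝ) = (1 / 2) ^ (1 : ℝ) := (rpow_one _).symm
      _ ≤ (1 / 2) ^ α := rpow_le_rpow_of_exponent_ge (by norm_num) (by norm_num) hα1
      _ ≤ (‖x₁ - x₂‖ / m) ^ α := by
        refine rpow_le_rpow (by norm_num) ?_ hα
        rw [le_div_iff₀ hm]
        linarith
    have eight_le : (8 : ℝ) ≤ 2 ^ (β + 3) := calc
      (8 : ℝ) = 2 ^ (3 : ℝ) := by norm_num
      _ ≤ 2 ^ (β + 3) := rpow_le_rpow_of_exponent_le one_le_two (by linarith)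
    calc ‖F x₁ - F x₂‖ ≤ ‖F x₁‖ + ‖F x₂‖ := norm_sub_le _ _
      _ ≤ C * m ^ (-β) * 2 := by
        linarith [decay_le x₁ hx₁ hm₁, decay_le x₂ hx₂ hm₂]
      _ ≤ C * m ^ (-β) * (2 ^ (β + 3) * (‖x₁ - x₂‖ / m) ^ α) := by
        gcongr
        nlinarith
  · have ratio_le : ‖x₁ - x₂‖ / m ≤ (‖x₁ - x₂‖ / m) ^ α :=
      self_le_rpow_of_le_one (by positivity) (by rw [div_le_one hm]; linarith) hα1
    calc ‖F x₁ - F x₂‖ ≤ C * (m / 2) ^ (-β - 1) * ‖x₁ - x₂‖ :=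
        norm_sub_le_of_fderiv_decay hβ hC hm hdiff hDF hm₁ h
      _ = C * m ^ (-β) * (2 ^ (β + 1) * (‖x₁ - x₂‖ / m)) := by
        rw [div_rpow hm.le zero_le_two, rpow_sub_one hm.ne', ← neg_add', rpow_neg zero_le_two]
        field_simp
      _ ≤ C * m ^ (-β) * (2 ^ (β + 3) * (‖x₁ - x₂‖ / m) ^ α) := by
        gcongr <;> norm_num

end HolderOfDecay

/-- Quantitative Hölder estimate from pointwise decay of a function and its gradient
(underlying Lemma 2.3 of the paper). -/
theorem stmt_0 (n : ℕ) (hn : 1 ≤ n) (β C α : ℝ) (hβ : 0 < β) (hC : 0 < C)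
    (hα : 0 < α) (hα1 : α ≤ 1) (y : EuclideanSpace ℝ (Fin n))
    (F : EuclideanSpace ℝ (Fin n) → ℝ)
    (hdiff : ∀ x, x ≠ y → DifferentiableAt ℝ F x)
    (hF : ∀ x, x ≠ y → |F x| ≤ C * ‖x - y‖ ^ (-β))
    (hDF : ∀ x, x ≠ y → ‖fderiv ℝ F x‖ ≤ C * ‖x - y‖ ^ (-β - 1)) :
    ∀ x₁ x₂, x₁ ≠ y → x₂ ≠ y →
      |F x₁ - F x₂| ≤
        (2 : ℝ) ^ (β + 3) * C * ‖x₁ - x₂‖ ^ α / (min ‖x₁ - y‖ ‖x₂ - y‖) ^ (β + α) :=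
  fun _ _ hx₁ hx₂ => norm_sub_le_rpow_of_decay hβ.le hC.le hα.le hα1 hdiff hF hDF hx₁ hx₂
end

section
/- Let k ≥ 1 be an integer and let ε be a real number with 0 < ε ≤ 1/(8k). If w₁, …, w_k are vectors in a real inner product space H satisfying |⟨wᵢ, wⱼ⟩ − δᵢⱼ| ≤ ε for all 1 ≤ i, j ≤ k, then for every choice of real numbers η₁, …, η_{k−1} one has ‖w_k − Σ_{i=1}^{k−1} ηᵢ wᵢ‖² ≥ 1/2. -/
open scoped RealInnerProductSpace

/-- Lower Riesz bound for an almost orthonormal finite family. -/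
theorem one_sub_mul_sum_sq_le_norm_sum_smul_sq {ι H : Type*} [DecidableEq ι]
    [NormedAddCommGroup H] [InnerProductSpace ℝ H] (s : Finset ι) (w : ι → H) (c : ι → ℝ)
    {ε : ℝ} (hε : 0 ≤ ε)
    (hw : ∀ i ∈ s, ∀ j ∈ s, |⟪w i, w j⟫ - if i = j then 1 else 0| ≤ ε) :
    (1 - ε * s.card) * ∑ i ∈ s, c i ^ 2 ≤ ‖∑ i ∈ s, c i • w i‖ ^ 2 := by
  have expand : ‖∑ i ∈ s, c i • w i‖ ^ 2 = ∑ i ∈ s, ∑ j ∈ s, c i * c j * ⟪w i, w j⟫ := by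
    rw [← real_inner_self_eq_norm_sq, sum_inner]
    refine Finset.sum_congr rfl fun i _ => ?_
    rw [inner_sum]
    refine Finset.sum_congr rfl fun j _ => ?_
    rw [real_inner_smul_left, real_inner_smul_right, mul_assoc]
  have entrywise : ∑ i ∈ s, ∑ j ∈ s, (c i * c j * (if i = j then 1 else 0) - ε * (|c i| * |c j|))
      ≤ ∑ i ∈ s, ∑ j ∈ s, c i * c j * ⟪w i, w j⟫ := by
    refine Finset.sum_le_sum fun i hi => Finset.sum_le_sum fun j hj => ?_
    have h := mul_le_mul_of_nonneg_left (hw i hi j hj) (abs_nonneg (c i * c j))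
    rw [← abs_mul, abs_mul (c i)] at h
    have := neg_abs_le (c i * c j * (⟪w i, w j⟫ - if i = j then 1 else 0))
    linarith
  have diagonal : ∑ i ∈ s, ∑ j ∈ s,
      (c i * c j * (if i = j then 1 else 0) - ε * (|c i| * |c j|))
      = ∑ i ∈ s, c i ^ 2 - ε * (∑ i ∈ s, |c i|) ^ 2 := by
    simp only [Finset.sum_sub_distrib, ← Finset.mul_sum, ← Finset.sum_mul, sq]
    congr 1
    refine Finset.sum_congr rfl fun i hi => ?_
    simp [hi]
  have cauchy : (∑ i ∈ s, |c i|) ^ 2 ≤ s.card * ∑ i ∈ s, c i ^ 2 := by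
    simpa using sq_sum_le_card_mul_sum_sq (s := s) (f := fun i => |c i|)
  have := mul_le_mul_of_nonneg_left cauchy hε
  linarith

/-- Key linear-algebra claim in the proof of part (b) of the Transformation Theorem:
an almost orthonormal family w₀, …, w_{k-1} satisfies
‖w_{k-1} - Σ_{i<k-1} ηᵢ wᵢ‖² ≥ 1/2 for any coefficients η. -/
theorem stmt_1 (k : ℕ) (hk : 1 ≤ k) (ε : ℝ) (hε : 0 < ε) (hε' : ε ≤ 1 / (8 * k))
    {H : Type*} [NormedAddCommGroup H] [InnerProductSpace ℝ H]
    (w : ℕ → H)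
    (hw : ∀ i < k, ∀ j < k, |⟪w i, w j⟫ - if i = j then 1 else 0| ≤ ε) :
    ∀ η : ℕ → ℝ, 1 / 2 ≤ ‖w (k - 1) - ∑ i ∈ Finset.range (k - 1), η i • w i‖ ^ 2 := by
  intro η
  obtain ⟨n, rfl⟩ := Nat.exists_eq_add_of_le' hk
  rw [Nat.add_sub_cancel]
  let c : ℕ → ℝ := fun i => if i = n then 1 else -η i
  have hsum : w n - ∑ i ∈ Finset.range n, η i • w i
      = ∑ i ∈ Finset.range (n + 1), c i • w i := by
    have h : ∑ i ∈ Finset.range n, c i • w i = ∑ i ∈ Finset.range n, -(η i • w i) :=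
      Finset.sum_congr rfl fun i hi => by simp [c, (Finset.mem_range.mp hi).ne]
    rw [Finset.sum_range_succ, h, Finset.sum_neg_distrib]
    simp [c, sub_eq_neg_add]
  have hriesz := one_sub_mul_sum_sq_le_norm_sum_smul_sq (Finset.range (n + 1)) w c hε.le
    fun i hi j hj => hw i (Finset.mem_range.mp hi) j (Finset.mem_range.mp hj)
  rw [Finset.card_range, ← hsum] at hriesz
  have hc : 1 ≤ ∑ i ∈ Finset.range (n + 1), c i ^ 2 := by
    have := Finset.single_le_sum (f := fun i => c i ^ 2) (fun i _ => sq_nonneg (c i))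
      (Finset.self_mem_range_succ n)
    simpa [c] using this
  rw [le_div_iff₀ (by positivity)] at hε'
  nlinarith
end

section
/- Let k ≥ 1 be an integer, H a real inner product space, and f₁, …, f_k ∈ H with ‖fᵢ‖ ≤ 2 for all i. Let A = (a_{ij}) be a k×k real lower triangular matrix (a_{ij} = 0 for j > i) with positive diagonal entries, and set vᵢ = Σ_{j=1}^{i} a_{ij} f_j. If |⟨vᵢ, vⱼ⟩ − δᵢⱼ| ≤ 1/(8k) for all 1 ≤ i, j ≤ k, then a_{ii} ≥ 1/3 for every 1 ≤ i ≤ k. -/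
open scoped RealInnerProductSpace

/-- A family whose Gram matrix is entrywise `ε`-close to the identity satisfies a lower Riesz
bound with constant `1 - card ι * ε`. -/
lemma mul_sum_sq_le_norm_sum_smul_sq {ι H : Type*} [Fintype ι] [DecidableEq ι]
    [NormedAddCommGroup H] [InnerProductSpace ℝ H] (v : ι → H) {ε : ℝ}
    (hv : ∀ i j, |⟪v i, v j⟫ - if i = j then 1 else 0| ≤ ε) (c : ι → ℝ) :
    (1 - Fintype.card ι * ε) * ∑ i, c i ^ 2 ≤ ‖∑ i, c i • v i‖ ^ 2 := by
  rcases isEmpty_or_nonempty ι with _ | ⟨⟨i₀⟩⟩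
  · simp
  have hε : 0 ≤ ε := (abs_nonneg _).trans (hv i₀ i₀)
  have hterm (i j : ι) :
      (if i = j then c i * c j else 0) - ε * (|c i| * |c j|) ≤ c i * c j * ⟪v i, v j⟫ := by
    have h : |c i * c j * (⟪v i, v j⟫ - if i = j then 1 else 0)| ≤ |c i| * |c j| * ε := by
      rw [abs_mul, abs_mul]
      exact mul_le_mul_of_nonneg_left (hv i j) (by positivity)
    have h' := (abs_le.mp h).1
    split_ifs at h' ⊢ <;> linarith
  have hexpand : ‖∑ i, c i • v i‖ ^ 2 = ∑ i, ∑ j, c i * c j * ⟪v i, v j⟫ := by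
    rw [← real_inner_self_eq_norm_sq, sum_inner]
    simp only [inner_sum, real_inner_smul_left, real_inner_smul_right, mul_assoc, mul_left_comm]
  have hsum : ∑ i, c i ^ 2 - ε * (∑ i, |c i|) ^ 2 ≤ ‖∑ i, c i • v i‖ ^ 2 := by
    rw [hexpand]
    refine le_trans (le_of_eq ?_)
      (Finset.sum_le_sum fun i _ => Finset.sum_le_sum fun j _ => hterm i j)
    simp [Finset.sum_sub_distrib, ← Finset.mul_sum, ← Finset.sum_mul, sq]
  have hcs : (∑ i, |c i|) ^ 2 ≤ Fintype.card ι * ∑ i, c i ^ 2 := by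
    simpa using sq_sum_le_card_mul_sum_sq (s := Finset.univ) (f := fun i => |c i|)
  linarith [mul_le_mul_of_nonneg_left hcs hε]

/-- If `v` is obtained from `f` by a lower triangular matrix with nonzero diagonal, then
each `f i` lies in the span of the `v j` with `j ≤ i`. -/
lemma mem_span_image_Iic_of_lower_triangular {ι K M : Type*} [Fintype ι] [LinearOrder ι]
    [Field K] [AddCommGroup M] [Module K M] {f v : ι → M} {A : Matrix ι ι K}
    (hlower : ∀ i j, i < j → A i j = 0) (hdiag : ∀ i, A i i ≠ 0)
    (hv : ∀ i, v i = ∑ j, A i j • f j) (i : ι) :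
    f i ∈ Submodule.span K (v '' Set.Iic i) := by
  induction i using WellFoundedLT.induction with
  | ind i ih =>
    rw [← Submodule.smul_mem_iff _ (hdiag i)]
    have hsplit : A i i • f i = v i - ∑ j ∈ Finset.univ.erase i, A i j • f j := by
      rw [hv i, ← Finset.add_sum_erase _ _ (Finset.mem_univ i), add_sub_cancel_right]
    rw [hsplit]
    refine sub_mem (Submodule.subset_span ⟨i, Set.mem_Iic.mpr le_rfl, rfl⟩)
      (sum_mem fun j hj => ?_)
    rcases lt_or_gt_of_ne (Finset.ne_of_mem_erase hj) with h | h
    · exact Submodule.smul_mem _ _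
        (Submodule.span_mono (Set.image_mono (Set.Iic_subset_Iic.mpr h.le)) (ih j h))
    · simp [hlower i j h]

/-- If `v` is obtained from `f` by a lower triangular matrix `A` with nonzero diagonal, then
`A i i • f i` is a linear combination of `v` in which `v i` has coefficient `1`. -/
lemma exists_coeff_eq_one_of_lower_triangular {ι K M : Type*} [Fintype ι] [LinearOrder ι]
    [Field K] [AddCommGroup M] [Module K M] {f v : ι → M} {A : Matrix ι ι K}
    (hlower : ∀ i j, i < j → A i j = 0) (hdiag : ∀ i, A i i ≠ 0)
    (hv : ∀ i, v i = ∑ j, A i j • f j) (i : ι) :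
    ∃ c : ι → K, c i = 1 ∧ ∑ j, c j • v j = A i i • f i := by
  have hmem : ∑ j ∈ Finset.univ.erase i, A i j • f j ∈
      Submodule.span K (v '' (Finset.univ.erase i : Finset ι)) := by
    refine sum_mem fun j hj => ?_
    rcases lt_or_gt_of_ne (Finset.ne_of_mem_erase hj) with h | h
    · refine Submodule.smul_mem _ _ (Submodule.span_mono (Set.image_mono fun l hl => ?_)
        (mem_span_image_Iic_of_lower_triangular hlower hdiag hv j))
      simpa using (lt_of_le_of_lt hl h).ne
    · simp [hlower i j h]
  obtain ⟨c, hc⟩ := (Submodule.mem_span_image_finset_iff_exists_fun' K).mp hmem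
  refine ⟨fun j => if j = i then 1 else -c j, if_pos rfl, ?_⟩
  have hoff : ∑ j ∈ Finset.univ.erase i, (if j = i then 1 else -c j) • v j =
      -∑ j ∈ Finset.univ.erase i, c j • v j := by
    rw [← Finset.sum_neg_distrib]
    refine Finset.sum_congr rfl fun j hj => ?_
    rw [if_neg (Finset.ne_of_mem_erase hj), neg_smul]
  have hvi : v i = A i i • f i + ∑ j ∈ Finset.univ.erase i, A i j • f j := by
    rw [hv i, Finset.add_sum_erase _ (fun j => A i j • f j) (Finset.mem_univ i)]
  rw [← Finset.add_sum_erase _ _ (Finset.mem_univ i), hoff, hc]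
  simp [hvi]

/-- Abstract content of Theorem 3.5 part (b): when a lower triangular matrix A with positive
diagonal transforms an almost-unit family f into an almost-orthonormal family v = A ∘ f,
the diagonal entries of A are bounded below by 1/3. -/
theorem stmt_2 (k : ℕ) (hk : 1 ≤ k) {H : Type*} [NormedAddCommGroup H]
    [InnerProductSpace ℝ H]
    (f : Fin k → H) (hf : ∀ i, ‖f i‖ ≤ 2)
    (A : Matrix (Fin k) (Fin k) ℝ)
    (hlower : ∀ i j : Fin k, i < j → A i j = 0)
    (hdiag : ∀ i, 0 < A i i)
    (v : Fin k → H) (hv : ∀ i, v i = ∑ j, A i j • f j)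
    (hortho : ∀ i j : Fin k, |⟪v i, v j⟫ - if i = j then 1 else 0| ≤ 1 / (8 * k)) :
    ∀ i, 1 / 3 ≤ A i i := by
  intro i
  obtain ⟨c, hci, hc⟩ :=
    exists_coeff_eq_one_of_lower_triangular hlower (fun i => (hdiag i).ne') hv i
  have hbound := mul_sum_sq_le_norm_sum_smul_sq v hortho c
  have hk' : (0 : ℝ) < k := by exact_mod_cast hk
  have hconst : 1 - (k : ℝ) * (1 / (8 * k)) = 7 / 8 := by
    field_simp
    norm_num
  rw [Fintype.card_fin, hconst, hc, norm_smul, Real.norm_of_nonneg (hdiag i).le] at hbound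
  have hone : 1 ≤ ∑ j, c j ^ 2 := by
    simpa [hci] using
      Finset.single_le_sum (fun j _ => sq_nonneg (c j)) (Finset.mem_univ i)
  have hnorm : (A i i * ‖f i‖) ^ 2 ≤ (A i i * 2) ^ 2 := by
    have := hdiag i
    gcongr
    exact hf i
  nlinarith [hdiag i]
end

section
/- Let k ≥ 2 be an integer, H a real inner product space, and 0 < ε ≤ 1/2. Suppose w₁, …, w_{k−1} ∈ H satisfy |⟨wᵢ, wⱼ⟩ − δᵢⱼ| ≤ ε for all 1 ≤ i, j ≤ k−1, and v ∈ H satisfies |⟨wᵢ, v⟩| ≤ ε for all i. Define aᵢ = −⟨wᵢ, v⟩/‖wᵢ‖² (well defined since ‖wᵢ‖² ≥ 1 − ε > 0) and u = v + Σ_{i=1}^{k−1} aᵢ wᵢ. Then |⟨u, wⱼ⟩| ≤ 2(k−2)ε² for every 1 ≤ j ≤ k−1, and ‖u‖² ≥ ‖v‖² − 4(k−1)ε². -/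
open scoped RealInnerProductSpace

section GramSchmidtStep

variable {ι H : Type*} [NormedAddCommGroup H] [InnerProductSpace ℝ H]

/-- A projection coefficient onto a vector of squared norm at least `1 / 2`. -/
lemma abs_neg_inner_div_norm_sq_le {x v : H} {ε : ℝ} (hx : 1 / 2 ≤ ‖x‖ ^ 2)
    (hv : |⟪x, v⟫| ≤ ε) : |-⟪x, v⟫ / ‖x‖ ^ 2| ≤ 2 * ε := by
  have hpos : 0 < ‖x‖ ^ 2 := by linarith
  rw [abs_div, abs_neg, abs_of_pos hpos, div_le_iff₀ hpos]
  nlinarith [abs_nonneg ⟪x, v⟫]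

/-- If the coefficient `a j` cancels the component of `v` along `w j`, then the inner product of
the corrected vector with `w j` only involves the other correction terms. -/
lemma abs_inner_add_sum_smul_le [Fintype ι] [DecidableEq ι] {w : ι → H} {a : ι → ℝ} {v : H}
    {A B : ℝ} {j : ι} (hj : ⟪v, w j⟫ + a j * ⟪w j, w j⟫ = 0) (ha : ∀ i, |a i| ≤ A)
    (hw : ∀ i, i ≠ j → |⟪w i, w j⟫| ≤ B) :
    |⟪v + ∑ i, a i • w i, w j⟫| ≤ ((Fintype.card ι : ℝ) - 1) * (A * B) := by
  have hsum : ⟪v + ∑ i, a i • w i, w j⟫ = ∑ i ∈ Finset.univ.erase j, a i * ⟪w i, w j⟫ := by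
    simp only [inner_add_left, sum_inner, real_inner_smul_left]
    rw [← Finset.add_sum_erase _ _ (Finset.mem_univ j), ← add_assoc, hj, zero_add]
  have hcard : ((Finset.univ.erase j).card : ℝ) = (Fintype.card ι : ℝ) - 1 := by
    rw [Finset.cast_card_erase_of_mem (Finset.mem_univ j), Finset.card_univ]
  rw [hsum, ← hcard, ← nsmul_eq_mul]
  refine (Finset.abs_sum_le_sum_abs _ _).trans (Finset.sum_le_card_nsmul _ _ _ fun i hi => ?_)
  rw [abs_mul]
  exact mul_le_mul (ha i) (hw i (Finset.ne_of_mem_erase hi)) (abs_nonneg _)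
    ((abs_nonneg _).trans (ha i))

lemma norm_sq_sub_le_norm_add_sum_smul_sq [Fintype ι] {w : ι → H} {a : ι → ℝ} {v : H}
    {A B : ℝ} (ha : ∀ i, |a i| ≤ A) (hv : ∀ i, |⟪w i, v⟫| ≤ B) :
    ‖v‖ ^ 2 - 2 * (Fintype.card ι * (A * B)) ≤ ‖v + ∑ i, a i • w i‖ ^ 2 := by
  have hinner : |⟪v, ∑ i, a i • w i⟫| ≤ Fintype.card ι * (A * B) := by
    simp only [inner_sum, real_inner_smul_right]
    rw [← Finset.card_univ, ← nsmul_eq_mul]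
    refine (Finset.abs_sum_le_sum_abs _ _).trans (Finset.sum_le_card_nsmul _ _ _ fun i _ => ?_)
    rw [abs_mul, real_inner_comm]
    exact mul_le_mul (ha i) (hv i) (abs_nonneg _) ((abs_nonneg _).trans (ha i))
  rw [norm_add_sq_real]
  nlinarith [(abs_le.mp hinner).1, sq_nonneg ‖∑ i, a i • w i‖]

end GramSchmidtStep

/-- Quantitative stability of one Gram–Schmidt-type correction step (Appendix A of the
paper, following Bamler). -/
theorem stmt_3 (k : ℕ) (hk : 2 ≤ k) {H : Type*} [NormedAddCommGroup H]
    [InnerProductSpace ℝ H] (ε : ℝ) (hε : 0 < ε) (hε' : ε ≤ 1 / 2)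
    (w : Fin (k - 1) → H)
    (hw : ∀ i j : Fin (k - 1), |⟪w i, w j⟫ - if i = j then 1 else 0| ≤ ε)
    (v : H) (hv : ∀ i, |⟪w i, v⟫| ≤ ε)
    (a : Fin (k - 1) → ℝ) (ha : ∀ i, a i = -⟪w i, v⟫ / ‖w i‖ ^ 2)
    (u : H) (hu : u = v + ∑ i, a i • w i) :
    (∀ j, |⟪u, w j⟫| ≤ 2 * ((k : ℝ) - 2) * ε ^ 2) ∧
      ‖v‖ ^ 2 - 4 * ((k : ℝ) - 1) * ε ^ 2 ≤ ‖u‖ ^ 2 := by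
  have hcard : (Fintype.card (Fin (k - 1)) : ℝ) = (k : ℝ) - 1 := by
    rw [Fintype.card_fin, Nat.cast_sub (by omega), Nat.cast_one]
  have hnorm : ∀ i, 1 / 2 ≤ ‖w i‖ ^ 2 := fun i => by
    have h := hw i i
    rw [if_pos rfl, real_inner_self_eq_norm_sq] at h
    linarith [(abs_le.mp h).1]
  have hcoeff : ∀ i, |a i| ≤ 2 * ε := fun i =>
    ha i ▸ abs_neg_inner_div_norm_sq_le (hnorm i) (hv i)
  subst hu
  refine ⟨fun j => ?_, ?_⟩
  · have hcancel : ⟪v, w j⟫ + a j * ⟪w j, w j⟫ = 0 := by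
      have hne : ‖w j‖ ^ 2 ≠ 0 := by linarith [hnorm j]
      rw [ha, real_inner_self_eq_norm_sq, div_mul_cancel₀ _ hne, real_inner_comm, add_neg_cancel]
    have h := abs_inner_add_sum_smul_le hcancel hcoeff fun i hij => by
      simpa [hij] using hw i j
    rw [hcard] at h
    linarith
  · have h := norm_sq_sub_le_norm_add_sum_smul_sq hcoeff hv
    rw [hcard] at h
    linarith
end

section
/- Let n ≥ 1 be an integer, α ∈ (0,1], z ∈ ℝⁿ, η > 0, and x ∈ B(z, η). Then ∫_{B(z,2η)} ‖y − z‖^{α} ‖x − y‖^{−(n−1)} dy ≤ 6 n ω_n η^{1+α}, where ω_n is the Lebesgue measure of the unit ball of ℝⁿ. -/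
open MeasureTheory Metric

section RadialKernel

variable {E : Type*} [NormedAddCommGroup E] [NormedSpace ℝ E] [FiniteDimensional ℝ E]
  [Nontrivial E]

variable (E) in
/-- The Jacobian of polar coordinates cancels the truncated kernel `t ^ (1 - dim E)`. -/
lemma eqOn_pow_smul_indicator_rpow_one_sub_finrank (r : ℝ) :
    Set.EqOn
      (fun t : ℝ ↦ t ^ (Module.finrank ℝ E - 1) •
        (Set.Iio r).indicator (fun s : ℝ ↦ s ^ (-((Module.finrank ℝ E : ℝ) - 1))) t)
      ((Set.Ioo 0 r).indicator (fun _ ↦ (1 : ℝ))) (Set.Ioi 0) := by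
  intro t (ht : 0 < t)
  have hd : 1 ≤ Module.finrank ℝ E := Module.finrank_pos
  by_cases htr : t < r
  · simp only [Set.indicator, Set.mem_Iio, Set.mem_Ioo, htr, ht, and_self, if_true, smul_eq_mul]
    rw [← Real.rpow_natCast, ← Real.rpow_add ht, Nat.cast_sub hd]
    simp
  · simp [htr]

variable [MeasurableSpace E] [BorelSpace E] (μ : Measure E) [μ.IsAddHaarMeasure]

lemma integrable_indicator_norm_rpow_one_sub_finrank (r : ℝ) :
    Integrable (fun y : E ↦
      (Set.Iio r).indicator (fun s : ℝ ↦ s ^ (-((Module.finrank ℝ E : ℝ) - 1))) ‖y‖) μ := by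
  rw [integrable_fun_norm_addHaar μ, integrableOn_congr_fun
    (eqOn_pow_smul_indicator_rpow_one_sub_finrank E r) measurableSet_Ioi]
  exact ((integrable_indicator_iff measurableSet_Ioo).2
    (integrableOn_const (by simp))).integrableOn

lemma integral_indicator_norm_rpow_one_sub_finrank {r : ℝ} (hr : 0 ≤ r) :
    ∫ y : E, (Set.Iio r).indicator
        (fun s : ℝ ↦ s ^ (-((Module.finrank ℝ E : ℝ) - 1))) ‖y‖ ∂μ =
      Module.finrank ℝ E * μ.real (ball 0 1) * r := by
  rw [integral_fun_norm_addHaar μ, setIntegral_congr_fun measurableSet_Ioi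
    (eqOn_pow_smul_indicator_rpow_one_sub_finrank E r),
    setIntegral_indicator measurableSet_Ioo,
    Set.inter_eq_right.2 (fun t (ht : t ∈ Set.Ioo 0 r) ↦ Set.mem_Ioi.2 ht.1)]
  simp [hr, mul_assoc]

end RadialKernel

/-- Convolution-type estimate from inequality (2.21) in Step 2 of the proof of
Theorem 1.2: for x ∈ B(z,η),
∫_{B(z,2η)} ‖y-z‖^α ‖x-y‖^{-(n-1)} dy ≤ 6 n ωₙ η^{1+α}. -/
theorem stmt_10 (n : ℕ) (hn : 1 ≤ n) (α : ℝ) (hα : 0 < α) (hα1 : α ≤ 1)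
    (z x : EuclideanSpace ℝ (Fin n)) (η : ℝ) (hη : 0 < η) (hx : x ∈ ball z η) :
    (∫ y in ball z (2 * η), ‖y - z‖ ^ α * ‖x - y‖ ^ (-((n : ℝ) - 1))) ≤
      6 * n * (volume (ball (0 : EuclideanSpace ℝ (Fin n)) 1)).toReal *
        η ^ (1 + α) := by
  have hfr : Module.finrank ℝ (EuclideanSpace ℝ (Fin n)) = n := by simp
  have : Nontrivial (EuclideanSpace ℝ (Fin n)) :=
    Module.nontrivial_of_finrank_pos (R := ℝ) (by omega)
  have hint := integrable_indicator_norm_rpow_one_sub_finrank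
    (volume : Measure (EuclideanSpace ℝ (Fin n))) (3 * η)
  have hval := integral_indicator_norm_rpow_one_sub_finrank
    (volume : Measure (EuclideanSpace ℝ (Fin n))) (r := 3 * η) (by positivity)
  rw [hfr] at hint hval
  set k : ℝ → ℝ := (Set.Iio (3 * η)).indicator (fun s : ℝ ↦ s ^ (-((n : ℝ) - 1))) with hk
  have hk0 : ∀ y : EuclideanSpace ℝ (Fin n), 0 ≤ k ‖x - y‖ := fun y ↦
    Set.indicator_apply_nonneg fun _ ↦ by positivity
  have hpow : (2 * η) ^ α ≤ 2 * η ^ α := by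
    rw [Real.mul_rpow zero_le_two hη.le]
    gcongr
    exact Real.rpow_le_self_of_one_le one_le_two hα1
  calc
    _ ≤ ∫ y, 2 * η ^ α * k ‖x - y‖ := by
      rw [← integral_indicator measurableSet_ball]
      refine integral_mono_of_nonneg
        (.of_forall fun y ↦ Set.indicator_apply_nonneg fun _ ↦ by positivity)
        ((hint.comp_sub_left x).const_mul _) (.of_forall fun y ↦ ?_)
      refine Set.indicator_apply_le' (fun hy ↦ ?_) fun _ ↦ mul_nonneg (by positivity) (hk0 y)
      rw [mem_ball, dist_eq_norm] at hy hx
      have hxy : ‖x - y‖ < 3 * η := by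
        have := norm_sub_le_norm_sub_add_norm_sub x z y
        rw [norm_sub_rev z y] at this
        linarith
      simp only [hk, Set.indicator_of_mem (Set.mem_Iio.2 hxy)]
      gcongr
      exact (Real.rpow_le_rpow (norm_nonneg _) hy.le hα.le).trans hpow
    _ = _ := by
      rw [integral_const_mul, integral_sub_left_eq_self (fun y ↦ k ‖y‖) volume x, hval,
        Real.rpow_add hη, Real.rpow_one, Measure.real]
      ring
end
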